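/- arXiv:2306.12081 — 8 statements merged into one kernel-verified Lean document; each statement's English description precedes it below -/
import Mathlib

section
/- Let $n > m > 2$ be integers, let $L(n,m) = \binom{n-2}{m-2}$ and $d = \lfloor (n-1)/2 \rfloor$. For $1 \le i \le d$ define the integers $a_i(n,m) = (4i-1)\binom{n-2}{m-2} - 2i\binom{2i}{m-1} + 2i\binom{2i-2}{m-1} + \binom{2i-2}{m-2}$ and $b_i(n,m) = -2\binom{n-2}{m-2} + \binom{2i}{m-1} - \binom{2i-2}{m-1}$. Then for every binary vector $\mathbf{x} = (x_1,\dots,x_n) \in \{0,1\}^n$, $P_n^{(m)}(\mathbf{x}) = L(n,m)\sum_{1 \le i < j \le n} x_i x_j + \min_{\mathbf{w} \in \{0,1\}^d} \sum_{i=1}^{d} w_i\left(a_i(n,m) + b_i(n,m)\sum_{j=1}^{n} x_j\right)$, where the minimum is taken over all $\mathbf{w} = (w_1,\dots,w_d) \in \{0,1\}^d$ and all arithmetic is in $\mathbb{Z}$. -/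
/-- The symmetric `m`-polynomial (elementary symmetric polynomial of degree `m`)
on `n` binary variables. -/
def symmPoly (n m : ℕ) (x : Fin n → ℤ) : ℤ :=
  ∑ S ∈ Finset.powersetCard m (Finset.univ : Finset (Fin n)), ∏ i ∈ S, x i

/-- The coefficient `a_i(n,m)` from Theorem 1. -/
def aCoef (n m i : ℕ) : ℤ :=
  (4 * (i : ℤ) - 1) * ((n - 2).choose (m - 2) : ℤ)
    - 2 * (i : ℤ) * ((2 * i).choose (m - 1) : ℤ)
    + 2 * (i : ℤ) * ((2 * i - 2).choose (m - 1) : ℤ)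
    + ((2 * i - 2).choose (m - 2) : ℤ)

/-- The coefficient `b_i(n,m)` from Theorem 1. -/
def bCoef (n m i : ℕ) : ℤ :=
  -2 * ((n - 2).choose (m - 2) : ℤ) + ((2 * i).choose (m - 1) : ℤ)
    - ((2 * i - 2).choose (m - 1) : ℤ)

def TT (N r i : ℕ) (k : ℤ) : ℤ := aCoef (N+2) (r+2) (i+1) + bCoef (N+2) (r+2) (i+1) * k

lemma TT_eq (N r i : ℕ) (k : ℤ) : TT N r i k =
    (-(N.choose r : ℤ) + ((2*i).choose r : ℤ)) +
    (k - 2 * (i+1)) * (-2 * (N.choose r : ℤ) + ((2*i+1).choose r : ℤ) + ((2*i).choose r : ℤ)) := by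
  have h1 : (2*(i+1)).choose (r+1) = (2*i+1).choose r + ((2*i).choose r + (2*i).choose (r+1)) := by
    rw [show 2*(i+1) = (2*i+1)+1 by ring, Nat.choose_succ_succ (2*i+1) r, Nat.choose_succ_succ (2*i) r]
  have h2 : 2*(i+1)-2 = 2*i := by omega
  unfold TT aCoef bCoef
  simp only [Nat.add_sub_cancel, show r+2-1 = r+1 from rfl, h1, h2]
  push_cast
  ring

lemma TT_nonpos (N r i k : ℕ) (hi : 2*i+1 ≤ N) (hk : 2*i+2 ≤ k) : TT N r i k ≤ 0 := by
  rw [TT_eq]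
  have h1 : ((2*i).choose r : ℤ) ≤ N.choose r := by exact_mod_cast Nat.choose_le_choose r (by omega)
  have h2 : ((2*i+1).choose r : ℤ) ≤ N.choose r := by exact_mod_cast Nat.choose_le_choose r hi
  have h3 : (0:ℤ) ≤ k - 2*(i+1) := by push_cast [← @Nat.cast_le ℤ] at hk; linarith
  nlinarith

lemma TT_nonneg (N r i k : ℕ) (hi : 2*i+1 ≤ N) (hk : k ≤ 2*i+1) : 0 ≤ TT N r i k := by
  rw [TT_eq]
  have h1 : ((2*i).choose r : ℤ) ≤ N.choose r := by exact_mod_cast Nat.choose_le_choose r (by omega)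
  have h2 : ((2*i+1).choose r : ℤ) ≤ N.choose r := by exact_mod_cast Nat.choose_le_choose r hi
  have h3 : (0:ℤ) ≤ 2*i+1-k := by push_cast [← @Nat.cast_le ℤ] at hk; linarith
  nlinarith

lemma TT_sum (N r q : ℕ) (hr : 1 ≤ r) (k : ℤ) : ∑ i ∈ Finset.range q, TT N r i k =
    ((2*q).choose (r+2) : ℤ) - (N.choose r : ℤ) * (q * (2*q-1)) +
    (k - 2*q) * (((2*q).choose (r+1) : ℤ) - 2*q*(N.choose r : ℤ)) := by
  induction q with
  | zero => simp
  | succ q ih =>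
    have h1 : (2*(q+1)).choose (r+1) = (2*q+1).choose r + ((2*q).choose r + (2*q).choose (r+1)) := by
      rw [show 2*(q+1) = (2*q+1)+1 by ring, Nat.choose_succ_succ (2*q+1) r, Nat.choose_succ_succ (2*q) r]
    have h2 : (2*(q+1)).choose (r+2) = (2*q).choose r + 2 * (2*q).choose (r+1) + (2*q).choose (r+2) := by
      rw [show 2*(q+1) = (2*q+1)+1 by ring, Nat.choose_succ_succ (2*q+1) (r+1), Nat.choose_succ_succ (2*q) r, Nat.choose_succ_succ (2*q) (r+1)]
      ring
    rw [Finset.sum_range_succ, ih, TT_eq, h1, h2]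
    push_cast
    ring

lemma TT_sum_half (N r k : ℕ) (hr : 1 ≤ r) (c : ℤ) (hc : 2 * c = k * (k-1)) :
    ∑ i ∈ Finset.range (k/2), TT N r i k = (k.choose (r+2) : ℤ) - (N.choose r : ℤ) * c := by
  rw [TT_sum _ _ _ hr]
  obtain ⟨q, rfl | rfl⟩ : ∃ q, k = 2*q ∨ k = 2*q+1 := ⟨k/2, by omega⟩
  · have : c = q * (2*q-1) := by push_cast at hc; linarith
    rw [show 2*q/2 = q by omega, this]; push_cast; ring
  · have : c = q * (2*q+1) := by push_cast at hc; linarith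
    rw [show (2*q+1)/2 = q by omega, this, Nat.choose_succ_succ (2*q) (r+1)]; push_cast; ring

lemma symm_eq (n m : ℕ) (x : Fin n → ℤ) (s : Finset (Fin n)) (hs : ∀ i, x i = if i ∈ s then 1 else 0) :
    symmPoly n m x = (s.card.choose m : ℤ) := by
  unfold symmPoly
  have : ∀ S : Finset (Fin n), ∏ i ∈ S, x i = if S ⊆ s then 1 else 0 := by
    intro S
    split_ifs with h
    · exact Finset.prod_eq_one fun i hi => by rw [hs, if_pos (h hi)]
    · obtain ⟨i, hi, hn⟩ := Finset.not_subset.1 h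
      exact Finset.prod_eq_zero hi (by rw [hs, if_neg hn])
  simp only [this]
  rw [Finset.sum_boole, ← Finset.card_powersetCard]
  congr 2
  ext S
  simp [Finset.mem_powersetCard, and_comm]

lemma pair_eq (n : ℕ) (x : Fin n → ℤ) (hx : ∀ i, x i = 0 ∨ x i = 1) :
    2 * (∑ p ∈ Finset.univ.filter (fun p : Fin n × Fin n => p.1 < p.2), x p.1 * x p.2)
     = (∑ j, x j) * ((∑ j, x j) - 1) := by
  have e1 : (∑ j, x j) * (∑ j, x j) = ∑ i, ∑ j, x i * x j := Finset.sum_mul_sum _ _ _ _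
  have e2 : ∑ i, x i = ∑ i, ∑ j, if i = j then x i * x j else 0 := by
    refine Finset.sum_congr rfl fun i _ => ?_
    rcases hx i with h | h <;> simp [h]
  have e3 : (∑ p ∈ Finset.univ.filter (fun p : Fin n × Fin n => p.1 < p.2), x p.1 * x p.2)
     = ∑ i, ∑ j, if i < j then x i * x j else 0 := by
    rw [Finset.sum_filter, Fintype.sum_prod_type]
  have e4 : ∑ i, ∑ j, (if i < j then x i * x j else 0) = ∑ i, ∑ j, if j < i then x i * x j else 0 := by
    rw [Finset.sum_comm]
    simp only [mul_comm]
  rw [mul_sub, mul_one, e1, two_mul, e3]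
  nth_rw 2 [e4]
  rw [e2]
  simp only [← Finset.sum_add_distrib, ← Finset.sum_sub_distrib]
  refine Finset.sum_congr rfl fun i _ => Finset.sum_congr rfl fun j _ => ?_
  rcases lt_trichotomy i j with h | h | h
  · simp [h, h.ne, h.not_gt]
  · simp [h]
  · simp [h, h.ne', h.not_gt]

lemma inf_eq (N r k : ℕ) (hk : k ≤ N + 2) :
    Finset.inf' Finset.univ Finset.univ_nonempty
            (fun w : Fin ((N + 2 - 1) / 2) → Bool =>
              ∑ i : Fin ((N + 2 - 1) / 2), (if w i then (1 : ℤ) else 0) * TT N r i k)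
    = ∑ i ∈ Finset.range (k/2), TT N r i k := by
  have hV : ∑ i : Fin ((N + 2 - 1) / 2), (if decide (2*(i:ℕ)+2 ≤ k) then (1 : ℤ) else 0) * TT N r i k
      = ∑ i ∈ Finset.range (k/2), TT N r i k := by
    rw [Fin.sum_univ_eq_sum_range (fun i => (if decide (2*i+2 ≤ k) then (1 : ℤ) else 0) * TT N r i k)]
    have h1 : ∑ i ∈ Finset.range (k/2), TT N r i k = ∑ i ∈ Finset.range (k/2), (if decide (2*i+2 ≤ k) then (1 : ℤ) else 0) * TT N r i k := by
      refine Finset.sum_congr rfl fun i hi => ?_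
      rw [Finset.mem_range] at hi
      simp [show 2*i+2 ≤ k by omega]
    rw [h1]
    rcases le_or_gt (k/2) ((N+2-1)/2) with h | h
    · symm
      apply Finset.sum_subset (by simpa using h)
      intro i _ hi
      rw [Finset.mem_range] at hi
      simp [show ¬ 2*i+2 ≤ k by omega]
    · apply Finset.sum_subset (by simpa using h.le)
      intro i hi hi'
      rw [Finset.mem_range] at hi hi'
      obtain rfl : N = 2*i := by omega
      obtain rfl : k = 2*i+2 := by omega
      rw [TT_eq, show ((2*i+2 : ℕ) : ℤ) - 2*((i:ℤ)+1) = 0 by push_cast; ring]; simp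
  rw [← hV]
  apply le_antisymm
  · exact Finset.inf'_le _ (Finset.mem_univ (fun i : Fin ((N + 2 - 1) / 2) => decide (2*(i:ℕ)+2 ≤ k)))
  · apply Finset.le_inf'
    intro w _
    refine Finset.sum_le_sum fun i _ => ?_
    have hi := i.2
    by_cases h : 2*(i:ℕ)+2 ≤ k
    · have := TT_nonpos N r i k (by omega) h
      cases w i <;> simp [h, this]
    · have := TT_nonneg N r i k (by omega) (by omega)
      cases w i <;> simp [h, this]

theorem stmt_0 (n m : ℕ) (hm : 2 < m) (hmn : m < n)
    (x : Fin n → ℤ) (hx : ∀ i, x i = 0 ∨ x i = 1) :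
    symmPoly n m x
      = ((n - 2).choose (m - 2) : ℤ) *
          (∑ p ∈ Finset.univ.filter (fun p : Fin n × Fin n => p.1 < p.2), x p.1 * x p.2)
        + Finset.inf' Finset.univ Finset.univ_nonempty
            (fun w : Fin ((n - 1) / 2) → Bool =>
              ∑ i : Fin ((n - 1) / 2), (if w i then (1 : ℤ) else 0) *
                (aCoef n m ((i : ℕ) + 1) + bCoef n m ((i : ℕ) + 1) * ∑ j, x j)) := by
  obtain ⟨N, rfl⟩ : ∃ N, n = N + 2 := ⟨n - 2, by omega⟩
  obtain ⟨r, rfl⟩ : ∃ r, m = r + 2 := ⟨m - 2, by omega⟩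
  have hs : ∀ i, x i = if i ∈ Finset.univ.filter (fun i => x i = 1) then 1 else 0 := by
    intro i
    rcases hx i with h | h <;> simp [h]
  have hp := pair_eq _ x hx
  rw [symm_eq _ _ x _ hs]
  have hsum : ∑ j, x j = ((Finset.univ.filter (fun i => x i = 1)).card : ℤ) := by
    rw [← Finset.sum_boole]
    exact Finset.sum_congr rfl fun i _ => by rcases hx i with h | h <;> simp [h]
  have hk : (Finset.univ.filter (fun i => x i = 1)).card ≤ N + 2 := by
    simpa using Finset.card_le_univ (Finset.univ.filter (fun i => x i = 1))
  rw [hsum] at hp ⊢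
  have h1 := TT_sum_half N r _ (by omega) _ hp
  rw [← inf_eq N r _ hk] at h1
  unfold TT at h1
  rw [h1]
  simp only [Nat.add_sub_cancel]
  ring
end

section
/- Let $n > m > 2$ be integers and let $d = \lfloor (n-m+2)/2 \rfloor$. For $1 \le i \le d$ define the integers $a_i(m) = (m-1)\left(\binom{m+2i-1}{m} - \binom{m+2i-3}{m}\right)$ and $b_i(m) = \binom{m+2i-4}{m-1} - \binom{m+2i-2}{m-1}$. Then for every binary vector $\mathbf{x} = (x_1,\dots,x_n) \in \{0,1\}^n$, $-P_n^{(m)}(\mathbf{x}) = \min_{\mathbf{w} \in \{0,1\}^d} \sum_{i=1}^{d} w_i\left(a_i(m) + b_i(m)\sum_{j=1}^{n} x_j\right)$, where the minimum is taken over all $\mathbf{w} = (w_1,\dots,w_d) \in \{0,1\}^d$ and all arithmetic is in $\mathbb{Z}$. -/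
/-- The coefficient `a_i(m)` from Theorem 2. -/
def aCoefNeg (m i : ℕ) : ℤ :=
  ((m : ℤ) - 1) * (((m + 2 * i - 1).choose m : ℤ) - ((m + 2 * i - 3).choose m : ℤ))

/-- The coefficient `b_i(m)` from Theorem 2. -/
def bCoefNeg (m i : ℕ) : ℤ :=
  ((m + 2 * i - 4).choose (m - 1) : ℤ) - ((m + 2 * i - 2).choose (m - 1) : ℤ)

theorem symmPoly_eq (n m : ℕ) (x : Fin n → ℤ) (hx : ∀ i, x i = 0 ∨ x i = 1) :
    ∃ k : ℕ, k ≤ n ∧ ∑ j, x j = (k : ℤ) ∧ symmPoly n m x = (k.choose m : ℤ) := by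
  classical
  have hx' : ∀ i, x i = if x i = 1 then 1 else 0 := by
    intro i
    rcases hx i with h | h <;> simp [h]
  refine ⟨(Finset.univ.filter (fun i => x i = 1)).card, ?_, ?_, ?_⟩
  · simpa using Finset.card_filter_le (Finset.univ : Finset (Fin n)) (fun i => x i = 1)
  · rw [Finset.card_filter]
    push_cast
    exact Finset.sum_congr rfl (fun i _ => hx' i)
  · rw [← Finset.card_powersetCard]
    have h1 : Finset.powersetCard m (Finset.univ.filter (fun i => x i = 1))
        = (Finset.powersetCard m (Finset.univ : Finset (Fin n))).filter
            (fun S => ∀ i ∈ S, x i = 1) := by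
      ext S
      simp only [Finset.mem_powersetCard, Finset.mem_filter, Finset.subset_iff, Finset.mem_univ]
      simp only [true_and, implies_true]
      exact and_comm
    rw [h1, Finset.card_filter]
    push_cast
    unfold symmPoly
    refine Finset.sum_congr rfl (fun S _ => ?_)
    split_ifs with h
    · exact Finset.prod_eq_one h
    · push Not at h
      obtain ⟨i, hi, h2⟩ := h
      exact Finset.prod_eq_zero hi ((hx i).resolve_right h2)

theorem aC (q i : ℕ) : aCoefNeg (q + 2) (i + 1)
    = ((q : ℤ) + 1) * (((q + 2 * i + 3).choose (q + 2) : ℤ) - ((q + 2 * i + 1).choose (q + 2) : ℤ)) := by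
  unfold aCoefNeg
  rw [show q + 2 + 2 * (i + 1) - 1 = q + 2 * i + 3 by omega,
    show q + 2 + 2 * (i + 1) - 3 = q + 2 * i + 1 by omega]
  push_cast
  ring

theorem bC (q i : ℕ) : bCoefNeg (q + 2) (i + 1)
    = ((q + 2 * i).choose (q + 1) : ℤ) - ((q + 2 * i + 2).choose (q + 1) : ℤ) := by
  unfold bCoefNeg
  rw [show q + 2 + 2 * (i + 1) - 4 = q + 2 * i by omega,
    show q + 2 + 2 * (i + 1) - 2 = q + 2 * i + 2 by omega,
    show q + 2 - 1 = q + 1 by omega]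

theorem psum (q t : ℕ) (k : ℤ) :
    ∑ i ∈ Finset.range t, (aCoefNeg (q + 2) (i + 1) + bCoefNeg (q + 2) (i + 1) * k)
      = ((q : ℤ) + 1) * ((q + 2 * t + 1).choose (q + 2) : ℤ)
        - k * ((q + 2 * t).choose (q + 1) : ℤ) := by
  induction t with
  | zero => simp
  | succ t ih =>
    rw [Finset.sum_range_succ, ih, aC, bC, show q + 2 * (t + 1) + 1 = q + 2 * t + 3 by ring,
      show q + 2 * (t + 1) = q + 2 * t + 2 by ring]
    ring

theorem absorb (p q : ℕ) :
    ((p : ℤ) + 1) * (p.choose (q + 1) : ℤ) = ((p + 1).choose (q + 2) : ℤ) * ((q : ℤ) + 2) := by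
  have := Nat.add_one_mul_choose_eq p (q + 1)
  have h : (((p + 1) * p.choose (q + 1) : ℕ) : ℤ) = (((p + 1).choose (q + 1 + 1) * (q + 1 + 1) : ℕ) : ℤ) := by
    exact_mod_cast this
  push_cast at h
  rw [h]; ring

theorem pascal (p q : ℕ) :
    ((p + 1).choose (q + 1) : ℤ) = (p.choose q : ℤ) + (p.choose (q + 1) : ℤ) := by
  exact_mod_cast Nat.choose_succ_succ p q

theorem term_eq (q i : ℕ) :
    aCoefNeg (q + 2) (i + 1) + bCoefNeg (q + 2) (i + 1) * ((q + 2 * i + 1 : ℕ) : ℤ)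
      = ((q + 2 * i + 1).choose q : ℤ) := by
  rw [aC, bC]
  generalize hp : q + 2 * i = p
  have e1 := absorb (p + 2) q
  have e2 := absorb p q
  have e3 := pascal (p + 2) (q + 1)
  have e4 := pascal (p + 1) (q + 1)
  have e5 := pascal (p + 1) q
  push_cast at *
  simp only [add_assoc, Nat.reduceAdd] at *
  linarith

theorem b_eq (q i : ℕ) : bCoefNeg (q + 2) (i + 1)
    = - ((q + 2 * i + 1).choose q : ℤ) - ((q + 2 * i).choose q : ℤ) := by
  rw [bC]
  have e5 := pascal (q + 2 * i + 1) q
  have e6 := pascal (q + 2 * i) q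
  simp only [add_assoc, Nat.reduceAdd] at *
  linarith

theorem term_nonneg (q i k : ℕ) (h : k < q + 2 + 2 * i) :
    0 ≤ aCoefNeg (q + 2) (i + 1) + bCoefNeg (q + 2) (i + 1) * (k : ℤ) := by
  have e := term_eq q i
  have hb := b_eq q i
  have h' : (k : ℤ) ≤ ((q + 2 * i + 1 : ℕ) : ℤ) := by exact_mod_cast (by omega)
  have p1 : (0 : ℤ) ≤ ((q + 2 * i + 1).choose q : ℤ) := by positivity
  have p2 : (0 : ℤ) ≤ ((q + 2 * i).choose q : ℤ) := by positivity
  have hb0 : bCoefNeg (q + 2) (i + 1) ≤ 0 := by linarith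
  nlinarith [mul_nonneg (neg_nonneg.2 hb0) (sub_nonneg.2 h')]

theorem term_nonpos (q i k : ℕ) (h : q + 2 + 2 * i ≤ k) :
    aCoefNeg (q + 2) (i + 1) + bCoefNeg (q + 2) (i + 1) * (k : ℤ) ≤ 0 := by
  have e := term_eq q i
  have hb := b_eq q i
  have h' : ((q + 2 * i + 1 : ℕ) : ℤ) + 1 ≤ (k : ℤ) := by exact_mod_cast (by omega)
  have p1 : (0 : ℤ) ≤ ((q + 2 * i + 1).choose q : ℤ) := by positivity
  have p2 : (0 : ℤ) ≤ ((q + 2 * i).choose q : ℤ) := by positivity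
  have hb0 : bCoefNeg (q + 2) (i + 1) ≤ 0 := by linarith
  nlinarith [mul_nonneg (neg_nonneg.2 hb0) (sub_nonneg.2 h')]

theorem opt_val (q n k : ℕ) (hk : k ≤ n) (hn : q + 2 < n) :
    ∑ i : Fin ((n - (q + 2) + 2) / 2), (if q + 2 + 2 * (i : ℕ) ≤ k then (1 : ℤ) else 0) *
      (aCoefNeg (q + 2) ((i : ℕ) + 1) + bCoefNeg (q + 2) ((i : ℕ) + 1) * (k : ℤ))
      = -(k.choose (q + 2) : ℤ) := by
  rw [Fin.sum_univ_eq_sum_range (fun i => (if q + 2 + 2 * i ≤ k then (1 : ℤ) else 0) *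
      (aCoefNeg (q + 2) (i + 1) + bCoefNeg (q + 2) (i + 1) * (k : ℤ)))]
  have hsub : Finset.range ((k - q) / 2) ⊆ Finset.range ((n - (q + 2) + 2) / 2) := by
    intro i hi
    simp only [Finset.mem_range] at *
    omega
  rw [← Finset.sum_subset hsub]
  · rw [Finset.sum_congr rfl (g := fun i => aCoefNeg (q + 2) (i + 1) + bCoefNeg (q + 2) (i + 1) * (k : ℤ)), psum]
    · generalize ht : (k - q) / 2 = t
      rcases Nat.eq_zero_or_pos t with h0 | h0
      · subst h0
        rw [Nat.choose_eq_zero_of_lt (show k < q + 2 by omega)]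
        simp
      · rcases (show k = q + 2 * t ∨ k = q + 2 * t + 1 by omega) with h | h
        · rw [← h]
          have := absorb k q
          have := pascal k (q + 1)
          simp only [add_assoc, Nat.reduceAdd] at *
          linarith
        · have := absorb (q + 2 * t) q
          have h2 : (k : ℤ) = ((q + 2 * t : ℕ) : ℤ) + 1 := by exact_mod_cast h
          rw [← h2] at this
          rw [← h] at this ⊢
          linarith
    · intro i hi
      simp only [Finset.mem_range] at hi
      rw [if_pos (by omega), one_mul]
  · intro i _ hi
    simp only [Finset.mem_range] at hi
    rw [if_neg (by omega), zero_mul]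

theorem stmt_1 (n m : ℕ) (hm : 2 < m) (hmn : m < n)
    (x : Fin n → ℤ) (hx : ∀ i, x i = 0 ∨ x i = 1) :
    -symmPoly n m x
      = Finset.inf' Finset.univ Finset.univ_nonempty
          (fun w : Fin ((n - m + 2) / 2) → Bool =>
            ∑ i : Fin ((n - m + 2) / 2), (if w i then (1 : ℤ) else 0) *
              (aCoefNeg m ((i : ℕ) + 1) + bCoefNeg m ((i : ℕ) + 1) * ∑ j, x j)) := by
  obtain ⟨q, rfl⟩ : ∃ q, m = q + 2 := ⟨m - 2, by omega⟩
  obtain ⟨k, hk, hs, hp⟩ := symmPoly_eq n (q + 2) x hx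
  rw [hs, hp, ← opt_val q n k hk hmn]
  apply le_antisymm
  · apply Finset.le_inf'
    intro w _
    refine Finset.sum_le_sum (fun i _ => ?_)
    rcases Nat.lt_or_ge k (q + 2 + 2 * (i : ℕ)) with h | h
    · have := term_nonneg q i k h
      rw [if_neg (by omega), zero_mul]
      split_ifs <;> simp [this]
    · have := term_nonpos q i k h
      rw [if_pos h, one_mul]
      split_ifs <;> simp [this]
  · refine (Finset.inf'_le _ (Finset.mem_univ (fun i : Fin ((n - (q + 2) + 2) / 2) => decide (q + 2 + 2 * (i : ℕ) ≤ k)))).trans ?_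
    simp only [decide_eq_true_eq]
    exact le_rfl
end

section
/- Let $n > m > 2$ be integers, let $d = \lfloor (n-1)/2 \rfloor$, and for $1 \le i \le d$ let $a_i(n,m) = (4i-1)\binom{n-2}{m-2} - 2i\binom{2i}{m-1} + 2i\binom{2i-2}{m-1} + \binom{2i-2}{m-2}$ and $b_i(n,m) = -2\binom{n-2}{m-2} + \binom{2i}{m-1} - \binom{2i-2}{m-1}$ (as integers). Then for every integer $l$ with $0 \le l \le n$, $\binom{l}{m} = \binom{n-2}{m-2}\binom{l}{2} + \sum_{i=1}^{d} \min\left(0,\ a_i(n,m) + b_i(n,m)\, l\right)$. -/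
lemma aux_sum1 (K : ℤ) (q l : ℕ) :
    ∑ t ∈ Finset.range l, (K - (t.choose (q+1) : ℤ)) = K * l - (l.choose (q+2) : ℤ) := by
  induction l with
  | zero => simp
  | succ l ih =>
    rw [Finset.sum_range_succ, ih, Nat.choose_succ_succ l (q+1)]
    push_cast
    ring

lemma aux_sum2 (K : ℤ) (q l : ℕ) :
    ∑ t ∈ Finset.range l, ((l:ℤ) - 1 - t) * (K - (t.choose (q+1) : ℤ))
      = K * (l.choose 2 : ℤ) - (l.choose (q+3) : ℤ) := by
  induction l with
  | zero => simp
  | succ l ih =>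
    have h := aux_sum1 K q l
    rw [Finset.sum_range_succ, Nat.choose_succ_succ l (q+2), Nat.choose_succ_succ l 1]
    have h2 : ∑ t ∈ Finset.range l, (((l+1:ℕ):ℤ) - 1 - t) * (K - (t.choose (q+1) : ℤ))
        = ∑ t ∈ Finset.range l, ((l:ℤ) - 1 - t) * (K - (t.choose (q+1) : ℤ))
          + ∑ t ∈ Finset.range l, (K - (t.choose (q+1) : ℤ)) := by
      rw [← Finset.sum_add_distrib]
      refine Finset.sum_congr rfl fun t _ => ?_
      push_cast
      ring
    rw [h2, ih, h]
    simp only [Nat.choose_one_right, Nat.succ_eq_add_one]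
    push_cast
    ring

lemma aux_pair (f : ℕ → ℤ) (d : ℕ) :
    ∑ i ∈ Finset.range d, (f (2*i) + f (2*i+1)) = ∑ t ∈ Finset.range (2*d), f t := by
  induction d with
  | zero => simp
  | succ d ih =>
    rw [Finset.sum_range_succ, ih, show 2*(d+1) = 2*d+1+1 by ring, Finset.sum_range_succ,
      Finset.sum_range_succ]
    ring

lemma aux_term (n q l j : ℕ) (hj : 2*j+3 ≤ n) :
    min 0 (aCoef n (q+3) (1+j) + bCoef n (q+3) (1+j) * (l : ℤ))
      = -(((l-1-(2*j) : ℕ) : ℤ) * (((n-2).choose (q+1) : ℤ) - ((2*j).choose (q+1) : ℤ))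
        + ((l-1-(2*j+1) : ℕ) : ℤ) * (((n-2).choose (q+1) : ℤ) - ((2*j+1).choose (q+1) : ℤ))) := by
  have e0 : ((2*j).choose (q+1) : ℤ) ≤ ((n-2).choose (q+1) : ℤ) := by
    exact_mod_cast Nat.choose_le_choose _ (by omega)
  have e1 : ((2*j+1).choose (q+1) : ℤ) ≤ ((n-2).choose (q+1) : ℤ) := by
    exact_mod_cast Nat.choose_le_choose _ (by omega)
  have key : aCoef n (q+3) (1+j) + bCoef n (q+3) (1+j) * (l : ℤ)
      = -(((l:ℤ)-1-2*j) * (((n-2).choose (q+1) : ℤ) - ((2*j).choose (q+1) : ℤ))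
        + ((l:ℤ)-1-(2*j+1)) * (((n-2).choose (q+1) : ℤ) - ((2*j+1).choose (q+1) : ℤ))) := by
    unfold aCoef bCoef
    rw [show 2*(1+j)-2 = 2*j by omega, show 2*(1+j) = 2*j+1+1 by omega,
      show q+3-1 = q+1+1 by omega, show q+3-2 = q+1 by omega,
      Nat.choose_succ_succ (2*j+1) (q+1), Nat.choose_succ_succ (2*j) (q+1)]
    push_cast
    ring
  rw [key]
  generalize ((n-2).choose (q+1) : ℤ) = K at *
  generalize ((2*j).choose (q+1) : ℤ) = x at *
  generalize ((2*j+1).choose (q+1) : ℤ) = y at *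
  by_cases h : 2*j+2 ≤ l
  · rw [show ((l-1-(2*j) : ℕ) : ℤ) = (l:ℤ)-1-2*j by omega,
      show ((l-1-(2*j+1) : ℕ) : ℤ) = (l:ℤ)-1-(2*j+1) by omega]
    apply min_eq_right
    have h1 : (0:ℤ) ≤ (l:ℤ)-1-2*j := by omega
    have h2 : (0:ℤ) ≤ (l:ℤ)-1-(2*j+1) := by omega
    nlinarith [mul_nonneg h1 (sub_nonneg.2 e0), mul_nonneg h2 (sub_nonneg.2 e1)]
  · rw [show l-1-(2*j) = 0 by omega, show l-1-(2*j+1) = 0 by omega]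
    simp only [Nat.cast_zero, zero_mul, add_zero, neg_zero]
    apply min_eq_left
    have h1 : (0:ℤ) ≤ -((l:ℤ)-1-2*j) := by omega
    have h2 : (0:ℤ) ≤ -((l:ℤ)-1-(2*j+1)) := by omega
    nlinarith [mul_nonneg h1 (sub_nonneg.2 e0), mul_nonneg h2 (sub_nonneg.2 e1)]

theorem stmt_3 (n m : ℕ) (hm : 2 < m) (hmn : m < n)
    (l : ℕ) (hl : l ≤ n) :
    (l.choose m : ℤ)
      = ((n - 2).choose (m - 2) : ℤ) * (l.choose 2 : ℤ)
        + ∑ i ∈ Finset.Icc 1 ((n - 1) / 2),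
            min 0 (aCoef n m i + bCoef n m i * (l : ℤ)) := by
  obtain ⟨q, rfl⟩ : ∃ q, m = q + 3 := ⟨m - 3, by omega⟩
  rw [show q + 3 - 2 = q + 1 by omega]
  set f : ℕ → ℤ := fun t => ((l-1-t : ℕ) : ℤ) *
    (((n-2).choose (q+1) : ℤ) - (t.choose (q+1) : ℤ)) with hf
  have h1 : ∑ i ∈ Finset.Icc 1 ((n - 1) / 2),
      min 0 (aCoef n (q+3) i + bCoef n (q+3) i * (l : ℤ))
      = - ∑ t ∈ Finset.range (2*((n-1)/2)), f t := by
    rw [← aux_pair, ← Finset.sum_neg_distrib, ← Finset.Ico_succ_right_eq_Icc,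
      Finset.sum_Ico_eq_sum_range]
    refine Finset.sum_congr (by simp) fun j hj => ?_
    rw [Finset.mem_range] at hj
    exact aux_term n q l j (by omega)
  have h2 : ∑ t ∈ Finset.range (2*((n-1)/2)), f t = ∑ t ∈ Finset.range n, f t := by
    apply Finset.sum_subset
    · intro t; simp only [Finset.mem_range]; omega
    · intro t ht ht'
      simp only [Finset.mem_range] at ht ht'
      by_cases h : t = n - 2
      · simp [hf, h]
      · simp only [hf]
        rw [show l-1-t = 0 by omega]; simp
  have h3 : ∑ t ∈ Finset.range l, f t = ∑ t ∈ Finset.range n, f t := by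
    apply Finset.sum_subset
    · intro t; simp only [Finset.mem_range]; omega
    · intro t ht ht'
      simp only [Finset.mem_range] at ht ht'
      simp only [hf]
      rw [show l-1-t = 0 by omega]; simp
  have h4 : ∑ t ∈ Finset.range l, f t = ((n-2).choose (q+1) : ℤ) * (l.choose 2 : ℤ)
      - (l.choose (q+3) : ℤ) := by
    rw [← aux_sum2]
    refine Finset.sum_congr rfl fun t ht => ?_
    rw [Finset.mem_range] at ht
    simp only [hf]
    rw [show ((l-1-t : ℕ) : ℤ) = (l:ℤ)-1-t by omega]
  rw [h1, h2, ← h3, h4]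
  ring
end

section
/- Let $n > m > 2$ be integers, let $d = \lfloor (n-m+2)/2 \rfloor$, and for $1 \le i \le d$ let $a_i(m) = (m-1)\left(\binom{m+2i-1}{m} - \binom{m+2i-3}{m}\right)$ and $b_i(m) = \binom{m+2i-4}{m-1} - \binom{m+2i-2}{m-1}$ (as integers). Then for every integer $l$ with $0 \le l \le n$, $-\binom{l}{m} = \sum_{i=1}^{d} \min\left(0,\ a_i(m) + b_i(m)\, l\right)$. -/
/-- The secant line. -/
def secS (r k : ℕ) (l : ℤ) : ℤ :=
  ((r : ℤ) + 1) * ((r + 2 * k + 1).choose (r + 2) : ℤ) - ((r + 2 * k).choose (r + 1) : ℤ) * l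

theorem secS_top (r k : ℕ) :
    secS r k ((r : ℤ) + 2 * k + 1) = -((r + 2 * k + 1).choose (r + 2) : ℤ) := by
  have h := Nat.add_one_mul_choose_eq (r + 2 * k) (r + 1)
  zify at h
  unfold secS
  rw [show r + 1 + 1 = r + 2 from rfl] at h
  linarith

theorem secS_bot (r k : ℕ) :
    secS r k ((r : ℤ) + 2 * k) = -((r + 2 * k).choose (r + 2) : ℤ) := by
  have h := secS_top r k
  have h2 := Nat.choose_succ_succ' (r + 2 * k) (r + 1)
  zify at h2
  unfold secS at *
  rw [show r + 1 + 1 = r + 2 from rfl] at h2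
  linarith

theorem term_eq_s4 (r j : ℕ) (l : ℤ) :
    aCoefNeg (r + 2) (j + 1) + bCoefNeg (r + 2) (j + 1) * l = secS r (j + 1) l - secS r j l := by
  unfold aCoefNeg bCoefNeg secS
  rw [show r + 2 + 2 * (j + 1) - 1 = r + 2 * (j + 1) + 1 by omega,
    show r + 2 + 2 * (j + 1) - 3 = r + 2 * j + 1 by omega,
    show r + 2 + 2 * (j + 1) - 4 = r + 2 * j by omega,
    show r + 2 + 2 * (j + 1) - 2 = r + 2 * (j + 1) by omega,
    show r + 2 - 1 = r + 1 by omega]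
  push_cast
  ring

theorem slope_le (r j : ℕ) :
    ((r + 2 * j).choose (r + 1) : ℤ) ≤ ((r + 2 * (j + 1)).choose (r + 1) : ℤ) := by
  exact_mod_cast Nat.choose_le_choose _ (by omega)

theorem term_nonneg_s4 (r j : ℕ) (l : ℤ) (hl : l ≤ r + 2 * j + 1) :
    0 ≤ secS r (j + 1) l - secS r j l := by
  have h1 := secS_top r j
  have h2 := secS_bot r (j + 1)
  have h3 := mul_le_mul_of_nonneg_left hl (sub_nonneg.2 (slope_le r j))
  have h4 := Nat.choose_succ_succ' (r + 2 * j + 1) (r + 1)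
  have h5 := Nat.choose_succ_succ' (r + 2 * j + 1) r
  rw [show r + 2 * j + 1 + 1 = r + 2 * (j + 1) by ring] at h4 h5
  rw [show r + 1 + 1 = r + 2 from rfl] at h4
  zify at h4 h5
  have h6 : (0 : ℤ) ≤ ((r + 2 * j + 1).choose r : ℤ) := by positivity
  unfold secS at *
  push_cast at *
  linarith

theorem term_nonpos_s4 (r j : ℕ) (l : ℤ) (hl : r + 2 * j + 2 ≤ l) :
    secS r (j + 1) l - secS r j l ≤ 0 := by
  have h1 := secS_top r j
  have h2 := secS_bot r (j + 1)
  have h3 := mul_le_mul_of_nonneg_left hl (sub_nonneg.2 (slope_le r j))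
  have h4 := Nat.choose_succ_succ' (r + 2 * j + 1) (r + 1)
  have h5 := Nat.choose_succ_succ' (r + 2 * j) r
  rw [show r + 2 * j + 1 + 1 = r + 2 * (j + 1) by ring] at h4
  rw [show r + 1 + 1 = r + 2 from rfl] at h4
  zify at h4 h5
  have h6 : (0 : ℤ) ≤ ((r + 2 * j).choose r : ℤ) := by positivity
  unfold secS at *
  push_cast at *
  linarith

theorem sum_A (r k : ℕ) (l : ℕ) (hl : r + 2 * k ≤ l) :
    ∑ i ∈ Finset.Icc 1 k, min 0 (aCoefNeg (r + 2) i + bCoefNeg (r + 2) i * (l : ℤ))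
      = secS r k l := by
  induction k with
  | zero => simp [secS]
  | succ k ih =>
    rw [Finset.sum_Icc_succ_top (by omega), ih (by omega), term_eq_s4,
      min_eq_right (term_nonpos_s4 r k l (by push_cast at *; omega))]
    ring

theorem sum_B (r k : ℕ) (l : ℕ) (hl : l ≤ r + 2 * k + 1) :
    ∑ i ∈ Finset.Icc 1 k, min 0 (aCoefNeg (r + 2) i + bCoefNeg (r + 2) i * (l : ℤ))
      = -(l.choose (r + 2) : ℤ) := by
  induction k with
  | zero => simp [Nat.choose_eq_zero_of_lt (show l < r + 2 by omega)]
  | succ k ih =>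
    by_cases h : l ≤ r + 2 * k + 1
    · rw [Finset.sum_Icc_succ_top (by omega), ih h, term_eq_s4,
        min_eq_left (term_nonneg_s4 r k l (by push_cast at *; omega))]
      ring
    · rw [sum_A r (k + 1) l (by omega)]
      obtain rfl | rfl : l = r + 2 * (k + 1) ∨ l = r + 2 * (k + 1) + 1 := by omega
      · rw [← secS_bot]; push_cast; rfl
      · rw [← secS_top]; push_cast; rfl

theorem stmt_4 (n m : ℕ) (hm : 2 < m) (hmn : m < n)
    (l : ℕ) (hl : l ≤ n) :
    -(l.choose m : ℤ)
      = ∑ i ∈ Finset.Icc 1 ((n - m + 2) / 2),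
          min 0 (aCoefNeg m i + bCoefNeg m i * (l : ℤ)) := by
  obtain ⟨r, rfl⟩ : ∃ r, m = r + 2 := ⟨m - 2, by omega⟩
  rw [sum_B r _ l (by omega)]
end

section
/- Let $n > m > 2$ be integers and define the integer sequence $A_l = \binom{l}{m} - \binom{n-2}{m-2}\binom{l}{2}$ for $0 \le l \le n$. Then $A_0 = A_1 = 0$ and the sequence is strictly decreasing from index $1$ on: $A_{l+1} < A_l$ for every integer $l$ with $1 \le l \le n-1$. In particular $A_l < 0$ for all $2 \le l \le n$, i.e. $\binom{l}{m} < \binom{n-2}{m-2}\binom{l}{2}$ for $2 \le l \le n$. -/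
theorem stmt_5 (n m : ℕ) (hm : 2 < m) (hmn : m < n)
    (A : ℕ → ℤ)
    (hA : ∀ l, A l = (l.choose m : ℤ) - ((n - 2).choose (m - 2) : ℤ) * (l.choose 2 : ℤ)) :
    A 0 = 0 ∧ A 1 = 0
      ∧ (∀ l : ℕ, 1 ≤ l → l ≤ n - 1 → A (l + 1) < A l)
      ∧ (∀ l : ℕ, 2 ≤ l → l ≤ n → A l < 0)
      ∧ (∀ l : ℕ, 2 ≤ l → l ≤ n →
          (l.choose m : ℤ) < ((n - 2).choose (m - 2) : ℤ) * (l.choose 2 : ℤ)) := by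
  have h0 : A 0 = 0 := by
    rw [hA, Nat.choose_eq_zero_of_lt (by omega : 0 < m)]; simp
  have h1 : A 1 = 0 := by
    rw [hA, Nat.choose_eq_zero_of_lt (by omega : 1 < m)]; simp
  have hd : ∀ l : ℕ, 1 ≤ l → l ≤ n - 1 → A (l + 1) < A l := by
    intro l hl hln
    obtain ⟨k, rfl⟩ : ∃ k, m = k + 3 := ⟨m - 3, by omega⟩
    obtain ⟨N, rfl⟩ : ∃ N, n = N + 2 := ⟨n - 2, by omega⟩
    obtain ⟨j, rfl⟩ : ∃ j, l = j + 1 := ⟨l - 1, by omega⟩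
    rw [hA, hA]
    have e1 : (j + 1 + 1).choose (k + 3) = (j + 1).choose (k + 2) + (j + 1).choose (k + 3) :=
      Nat.choose_succ_succ _ _
    have e2 : (j + 1 + 1).choose 2 = (j + 1) + (j + 1).choose 2 := by
      rw [Nat.choose_succ_succ (j + 1) 1, Nat.choose_one_right]
    have e3 : (j + 1) * j.choose (k + 1) = (j + 1).choose (k + 2) * (k + 2) :=
      Nat.add_one_mul_choose_eq _ _
    have e4 : j.choose (k + 1) ≤ N.choose (k + 1) := Nat.choose_le_choose _ (by omega)
    have e5 : 0 < N.choose (k + 1) := Nat.choose_pos (by omega)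
    have s1 : N + 2 - 2 = N := by omega
    have s2 : k + 3 - 2 = k + 1 := by omega
    rw [e1, e2, s1, s2]
    have key : (j + 1).choose (k + 2) < N.choose (k + 1) * (j + 1) := by
      have a : (j + 1) * j.choose (k + 1) ≤ (j + 1) * N.choose (k + 1) :=
        Nat.mul_le_mul_left _ e4
      have b : 0 < (j + 1) * N.choose (k + 1) := by positivity
      have c : (j + 1).choose (k + 2) * 2 ≤ (j + 1).choose (k + 2) * (k + 2) :=
        Nat.mul_le_mul_left _ (by omega)
      rw [mul_comm (N.choose (k + 1))]
      omega
    zify at key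
    push_cast
    linarith
  have hneg : ∀ l : ℕ, 2 ≤ l → l ≤ n → A l < 0 := by
    intro l hl
    induction l, hl using Nat.le_induction with
    | base =>
      intro h
      have := hd 1 le_rfl (by omega)
      rwa [h1] at this
    | succ l hl ih =>
      intro h
      exact (hd l (by omega) (by omega)).trans (ih (by omega))
  refine ⟨h0, h1, hd, hneg, ?_⟩
  intro l hl hln
  have := hneg l hl hln
  rw [hA] at this
  linarith
end

section
/- Let $n > m > 2$ be integers and for $i \ge 1$ define the integers $a_i(n,m) = (4i-1)\binom{n-2}{m-2} - 2i\binom{2i}{m-1} + 2i\binom{2i-2}{m-1} + \binom{2i-2}{m-2}$ and $b_i(n,m) = -2\binom{n-2}{m-2} + \binom{2i}{m-1} - \binom{2i-2}{m-1}$. Then for every integer $i \ge 1$ the partial sum of the arithmetic progressions matches the target sequence at the indices $2i$ and $2i+1$: $\sum_{k=1}^{i}\left(a_k(n,m) + 2i\, b_k(n,m)\right) = \binom{2i}{m} - \binom{n-2}{m-2}\binom{2i}{2}$ and $\sum_{k=1}^{i}\left(a_k(n,m) + (2i+1)\, b_k(n,m)\right) = \binom{2i+1}{m} - \binom{n-2}{m-2}\binom{2i+1}{2}$.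 -/
theorem sumB (n p : ℕ) (hp : 0 < p) (i : ℕ) :
    ∑ k ∈ Finset.Icc 1 i, bCoef n (p + 2) k
      = -2 * (i : ℤ) * ((n - 2).choose p : ℤ) + ((2 * i).choose (p + 1) : ℤ) := by
  induction i with
  | zero => simp
  | succ i ih =>
    rw [Finset.sum_Icc_succ_top (by omega), ih]
    have h1 : 2 * (i + 1) - 2 = 2 * i := by omega
    have h2 : p + 2 - 1 = p + 1 := by omega
    have h3 : p + 2 - 2 = p := by omega
    simp only [bCoef, h1, h2, h3]
    push_cast
    ring

theorem choose_two_int (j : ℕ) : 2 * (j.choose 2 : ℤ) = j * (j - 1) := by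
  induction j with
  | zero => simp
  | succ j ih =>
    rw [Nat.choose_succ_succ' j 1]
    push_cast
    simp only [Nat.choose_one_right]
    linarith

theorem sumA (n p : ℕ) (hp : 0 < p) (i : ℕ) :
    ∑ k ∈ Finset.Icc 1 i, aCoef n (p + 2) k
      = ((2 * i).choose (p + 2) : ℤ) - ((n - 2).choose p : ℤ) * (i * (2 * i - 1))
        - 2 * (i : ℤ) * (-2 * (i : ℤ) * ((n - 2).choose p : ℤ)
          + ((2 * i).choose (p + 1) : ℤ)) := by
  induction i with
  | zero => simp
  | succ i ih =>
    rw [Finset.sum_Icc_succ_top (by omega), ih]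
    have h1 : 2 * (i + 1) - 2 = 2 * i := by omega
    have h2 : p + 2 - 1 = p + 1 := by omega
    have h3 : p + 2 - 2 = p := by omega
    have h4 : (2 * (i + 1)).choose (p + 2)
        = (2 * i).choose p + 2 * (2 * i).choose (p + 1) + (2 * i).choose (p + 2) := by
      rw [show 2 * (i + 1) = 2 * i + 1 + 1 by ring, Nat.choose_succ_succ' (2 * i + 1) (p + 1),
        Nat.choose_succ_succ' (2 * i) (p + 1), Nat.choose_succ_succ' (2 * i) p]
      ring
    simp only [aCoef, h1, h2, h3, h4]
    push_cast
    ring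

theorem stmt_8 (n m : ℕ) (hm : 2 < m) (hmn : m < n) (i : ℕ) (hi : 1 ≤ i) :
    (∑ k ∈ Finset.Icc 1 i, (aCoef n m k + 2 * (i : ℤ) * bCoef n m k)
        = ((2 * i).choose m : ℤ) - ((n - 2).choose (m - 2) : ℤ) * ((2 * i).choose 2 : ℤ))
      ∧ (∑ k ∈ Finset.Icc 1 i, (aCoef n m k + (2 * (i : ℤ) + 1) * bCoef n m k)
          = ((2 * i + 1).choose m : ℤ)
            - ((n - 2).choose (m - 2) : ℤ) * ((2 * i + 1).choose 2 : ℤ)) := by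
  obtain ⟨p, rfl⟩ : ∃ p, m = p + 2 := ⟨m - 2, by omega⟩
  have hp : 0 < p := by omega
  have h3 : p + 2 - 2 = p := by omega
  have e1 := choose_two_int (2 * i)
  have e2 := choose_two_int (2 * i + 1)
  have f1 : ((2 * i).choose 2 : ℤ) = i * (2 * i - 1) := by push_cast at e1; linarith
  have f2 : ((2 * i + 1).choose 2 : ℤ) = i * (2 * i + 1) := by push_cast at e2; linarith
  simp only [Finset.sum_add_distrib, ← Finset.mul_sum, sumA n p hp, sumB n p hp, h3, f1, f2]
  refine ⟨by ring, ?_⟩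
  rw [Nat.choose_succ_succ' (2 * i) (p + 1)]
  push_cast
  ring
end

section
/- (Freedman's degree reduction for negative monomials.) Let $d \ge 1$ and let $x_1, \dots, x_d \in \{0,1\} \subseteq \mathbb{Z}$. Then $-\prod_{j=1}^{d} x_j = \min_{w \in \{0,1\}} w\left((d-1) - \sum_{j=1}^{d} x_j\right)$. -/
theorem stmt_16 (d : ℕ) (hd : 1 ≤ d)
    (x : Fin d → ℤ) (hx : ∀ j, x j = 0 ∨ x j = 1) :
    -(∏ j, x j)
      = Finset.inf' Finset.univ Finset.univ_nonempty
          (fun w : Bool =>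
            (if w then (1 : ℤ) else 0) * (((d : ℤ) - 1) - ∑ j, x j)) := by
  have key : Finset.inf' Finset.univ Finset.univ_nonempty
          (fun w : Bool =>
            (if w then (1 : ℤ) else 0) * (((d : ℤ) - 1) - ∑ j, x j))
      = min (((d : ℤ) - 1) - ∑ j, x j) 0 := by
    apply le_antisymm
    · apply le_min
      · exact (Finset.inf'_le _ (Finset.mem_univ true)).trans (by simp)
      · exact (Finset.inf'_le _ (Finset.mem_univ false)).trans (by simp)
    · apply Finset.le_inf'
      intro b _
      cases b <;> simp
  rw [key]
  by_cases h : ∀ j, x j = 1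
  · simp [h]
  · push Not at h
    obtain ⟨j, hj⟩ := h
    have hj0 : x j = 0 := (hx j).resolve_right hj
    rw [Finset.prod_eq_zero (Finset.mem_univ j) hj0]
    have h1 : ∑ i, x i ≤ ∑ i, (if i = j then (0 : ℤ) else 1) := by
      apply Finset.sum_le_sum
      intro i _
      split_ifs with e
      · rw [e, hj0]
      · rcases hx i with h | h <;> omega
    have h2 : ∑ i : Fin d, (if i = j then (0 : ℤ) else 1) = d - 1 := by
      have : ∀ i : Fin d, (if i = j then (0 : ℤ) else 1) = 1 - (if i = j then 1 else 0) := by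
        intro i; split_ifs <;> rfl
      simp_rw [this]
      rw [Finset.sum_sub_distrib]
      simp
    rw [min_eq_right (by linarith)]
    rfl
end

section
/- (Ishikawa's degree reduction for positive monomials of even degree.) Let $d \ge 2$ and let $x_1, \dots, x_{2d} \in \{0,1\} \subseteq \mathbb{Z}$. Then $\prod_{j=1}^{2d} x_j = \sum_{1 \le i < j \le 2d} x_i x_j + \min_{\mathbf{w} \in \{0,1\}^{d-1}}\left[\sum_{i=1}^{d-1} (4i-1) w_i - 2\left(\sum_{i=1}^{d-1} w_i\right)\left(\sum_{j=1}^{2d} x_j\right)\right]$, where the minimum is over all $\mathbf{w} = (w_1, \dots, w_{d-1}) \in \{0,1\}^{d-1}$. -/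
theorem aux_f (n : ℕ) (k : ℤ) (hk : 0 ≤ k) :
    (2 * n ≤ k → ∑ i ∈ Finset.range n, min 0 (4 * ((i : ℤ) + 1) - 1 - 2 * k) = 2 * n ^ 2 + n - 2 * k * n) ∧
    (k ≤ 2 * n + 1 → 2 * ∑ i ∈ Finset.range n, min 0 (4 * ((i : ℤ) + 1) - 1 - 2 * k) = - (k * (k - 1))) := by
  induction n with
  | zero =>
    refine ⟨fun _ => by simp, fun h => ?_⟩
    have : k = 0 ∨ k = 1 := by push_cast at h; omega
    rcases this with rfl | rfl <;> simp
  | succ n ih =>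
    rw [Finset.sum_range_succ]
    push_cast
    constructor
    · intro h
      rw [ih.1 (by linarith), min_eq_right (by linarith)]
      ring
    · intro h
      by_cases h2 : k ≤ 2 * n + 1
      · rw [mul_add, ih.2 h2, min_eq_left (by linarith)]
        ring
      · rw [ih.1 (by linarith), min_eq_right (by omega)]
        have : k = 2 * n + 2 ∨ k = 2 * n + 3 := by omega
        rcases this with rfl | rfl <;> ring

theorem aux_pairs (n : ℕ) (x : Fin n → ℤ) (hx : ∀ j, x j = 0 ∨ x j = 1) :
    2 * (∑ p ∈ Finset.univ.filter (fun p : Fin n × Fin n => p.1 < p.2), x p.1 * x p.2)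
      = (∑ j, x j) * ((∑ j, x j) - 1) := by
  have hsq : ∑ j, x j = ∑ p : Fin n × Fin n, if p.1 = p.2 then x p.1 * x p.2 else 0 := by
    rw [Fintype.sum_prod_type]
    refine Finset.sum_congr rfl fun j _ => ?_
    rcases hx j with h | h <;> simp [h]
  have hsw : (∑ p : Fin n × Fin n, if p.1 < p.2 then x p.1 * x p.2 else 0)
      = ∑ p : Fin n × Fin n, if p.2 < p.1 then x p.1 * x p.2 else 0 := by
    rw [← (Equiv.prodComm (Fin n) (Fin n)).sum_comp]
    refine Finset.sum_congr rfl fun p _ => ?_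
    simp [mul_comm]
  have hall : (∑ j, x j) * (∑ j, x j) = ∑ p : Fin n × Fin n, x p.1 * x p.2 := by
    rw [Finset.sum_mul_sum, Fintype.sum_prod_type]
  have hsplit : ∑ p : Fin n × Fin n, x p.1 * x p.2
      = (∑ p : Fin n × Fin n, if p.1 < p.2 then x p.1 * x p.2 else 0)
        + (∑ p : Fin n × Fin n, if p.2 < p.1 then x p.1 * x p.2 else 0)
        + ∑ p : Fin n × Fin n, if p.1 = p.2 then x p.1 * x p.2 else 0 := by
    rw [← Finset.sum_add_distrib, ← Finset.sum_add_distrib]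
    refine Finset.sum_congr rfl fun p _ => ?_
    rcases lt_trichotomy p.1 p.2 with h | h | h
    · simp [h, h.ne, h.le]
    · simp [h]
    · simp [h, h.ne', h.le]
  rw [Finset.sum_filter, mul_sub, hall, hsplit, ← hsw, ← hsq]
  ring

theorem aux_inf (n : ℕ) (k : ℤ) :
    Finset.inf' Finset.univ Finset.univ_nonempty
            (fun w : Fin n → Bool =>
              (∑ i : Fin n,
                  (4 * ((i : ℕ) + 1 : ℤ) - 1) * (if w i then (1 : ℤ) else 0))
                - 2 * (∑ i : Fin n, (if w i then (1 : ℤ) else 0)) * k)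
      = ∑ i ∈ Finset.range n, min 0 (4 * ((i : ℤ) + 1) - 1 - 2 * k) := by
  rw [Finset.sum_range]
  have key : ∀ w : Fin n → Bool, (∑ i : Fin n,
                  (4 * ((i : ℕ) + 1 : ℤ) - 1) * (if w i then (1 : ℤ) else 0))
                - 2 * (∑ i : Fin n, (if w i then (1 : ℤ) else 0)) * k
      = ∑ i : Fin n, if w i then (4 * ((i : ℕ) + 1 : ℤ) - 1 - 2 * k) else 0 := by
    intro w
    rw [Finset.mul_sum, Finset.sum_mul, ← Finset.sum_sub_distrib]
    refine Finset.sum_congr rfl fun i _ => ?_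
    split_ifs <;> ring
  apply le_antisymm
  · refine (Finset.inf'_le _ (Finset.mem_univ
      (fun i : Fin n => decide (4 * ((i : ℕ) + 1 : ℤ) - 1 - 2 * k < 0)))).trans ?_
    rw [key]
    refine Finset.sum_le_sum fun i _ => ?_
    by_cases h : 4 * ((i : ℕ) + 1 : ℤ) - 1 - 2 * k < 0
    · rw [if_pos (by simpa using h), min_eq_right h.le]
    · rw [if_neg (by simpa using h), min_eq_left (not_lt.mp h)]
  · refine Finset.le_inf' _ _ fun w _ => ?_
    rw [key]
    refine Finset.sum_le_sum fun i _ => ?_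
    split_ifs
    · exact min_le_right _ _
    · exact min_le_left _ _

theorem stmt_17 (d : ℕ) (hd : 2 ≤ d)
    (x : Fin (2 * d) → ℤ) (hx : ∀ j, x j = 0 ∨ x j = 1) :
    (∏ j, x j)
      = (∑ p ∈ Finset.univ.filter (fun p : Fin (2 * d) × Fin (2 * d) => p.1 < p.2),
          x p.1 * x p.2)
        + Finset.inf' Finset.univ Finset.univ_nonempty
            (fun w : Fin (d - 1) → Bool =>
              (∑ i : Fin (d - 1),
                  (4 * ((i : ℕ) + 1 : ℤ) - 1) * (if w i then (1 : ℤ) else 0))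
                - 2 * (∑ i : Fin (d - 1), (if w i then (1 : ℤ) else 0)) * (∑ j, x j)) := by
  rw [aux_inf]
  have hp := aux_pairs _ x hx
  have hk : 0 ≤ ∑ j, x j := Finset.sum_nonneg fun j _ => by rcases hx j with h | h <;> simp [h]
  have hf := aux_f (d - 1) _ hk
  have hc : ((d - 1 : ℕ) : ℤ) = d - 1 := by omega
  rw [hc] at hf
  by_cases hall : ∀ j, x j = 1
  · have hprod : ∏ j, x j = 1 := by simp [hall]
    have hsum : ∑ j, x j = 2 * d := by simp [hall]
    rw [hsum] at hp hf ⊢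
    rw [hf.1 (by linarith), hprod]
    linarith
  · push Not at hall
    obtain ⟨j, hj⟩ := hall
    have h0 : x j = 0 := (hx j).resolve_right hj
    have hprod : ∏ j, x j = 0 := Finset.prod_eq_zero (Finset.mem_univ j) h0
    have hlt : ∑ j, x j < ∑ j : Fin (2 * d), (1 : ℤ) :=
      Finset.sum_lt_sum (fun i _ => by rcases hx i with h | h <;> simp [h])
        ⟨j, Finset.mem_univ j, by simp [h0]⟩
    have hlt' : ∑ j, x j < 2 * d := by simpa using hlt
    have := hf.2 (by linarith)
    rw [hprod]
    linarith
end
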